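/- Let (V, w, d) be a finite weighted metric space, k ≥ 1 an integer, and define the k-means cost cost(S) = ∑_{x∈V} w(x)·(min_{y∈S} d(x,y))² for nonempty S ⊆ V, and OPT_k(V) := min over S* ⊆ V with |S*| = k of cost(S*). Then for every 0 < ε < 1 and every subset S ⊆ V with |S| = i ≥ 2k + 1, min_{y ∈ S} cost(S − y) ≤ (1 + 3ε/k)·cost(S) + ((4 + 2/ε)/k)·OPT_k(V). -/

import Mathlib

/-!
Fix a competitor `Q` with `|Q| = k`, and let `s x` and `o x` be nearest points to `x` in `S` and
in `Q`. At least `|S| - k ≥ k` points `y` of `S` lie outside `s '' Q`. Such a `y` can be removed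
by moving each point `x` that it serves to `s (o x)`. By the triangle inequality the new distance
is at most `2 d(x,Q) + d(x,S)`, and `4ab ≤ 2ε b² + (2/ε) a²` bounds the increase of the squared
distance by `2ε d(x,S)² + (4 + 2/ε) d(x,Q)²` (`sq_dist_reassign_le`). The sets of points served by
different `y` are disjoint, so these increases sum to at most `2ε cost(S) + (4 + 2/ε) cost(Q)`,
and the cheapest of the at least `k` removals increases the cost by at most a `1/k` fraction of
this. Taking the infimum over `Q` gives the claim.
-/

open Finset

/-- Distance from a point to a (nonempty) finite set: `min_{y ∈ S} d(x,y)`. -/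
noncomputable def distToSet {V : Type*} [MetricSpace V] (x : V) (S : Finset V) : ℝ :=
  sInf ((fun y => dist x y) '' ↑S)

/-- `k`-means cost of a center set `S` with respect to the point set `U`:
`∑_{x ∈ U} w(x) · d(x, S)²`. -/
noncomputable def kCost2 {V : Type*} [MetricSpace V] (w : V → NNReal) (S U : Finset V) : ℝ :=
  ∑ x ∈ U, (w x : ℝ) * (distToSet x S) ^ 2

/-- `OPT_k(U, X)` for `k`-means: minimum over `S ⊆ X` with `|S| = k` of `kCost2 w S U`. -/
noncomputable def kOPT2 {V : Type*} [MetricSpace V] (w : V → NNReal) (k : ℕ) (U X : Finset V) : ℝ :=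
  sInf {c : ℝ | ∃ S : Finset V, S ⊆ X ∧ S.card = k ∧ c = kCost2 w S U}

lemma distToSet_le {V : Type*} [MetricSpace V] (x : V) {S : Finset V} {y : V} (hy : y ∈ S) :
    distToSet x S ≤ dist x y :=
  csInf_le ⟨0, by rintro _ ⟨z, -, rfl⟩; exact dist_nonneg⟩ ⟨y, by simpa using hy, rfl⟩

lemma distToSet_nonneg {V : Type*} [MetricSpace V] (x : V) (S : Finset V) : 0 ≤ distToSet x S :=
  Real.sInf_nonneg (by rintro _ ⟨z, -, rfl⟩; exact dist_nonneg)

lemma exists_distToSet_eq {V : Type*} [MetricSpace V] (x : V) {S : Finset V} (hS : S.Nonempty) :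
    ∃ y ∈ S, distToSet x S = dist x y := by
  have h := (Set.Nonempty.image (fun y => dist x y) (Finset.coe_nonempty.mpr hS)).csInf_mem
    (S.finite_toSet.image _)
  obtain ⟨y, hy, h⟩ := h
  exact ⟨y, by simpa using hy, h.symm⟩

lemma kCost2_nonneg {V : Type*} [MetricSpace V] (w : V → NNReal) (S U : Finset V) :
    0 ≤ kCost2 w S U :=
  Finset.sum_nonneg fun _ _ => mul_nonneg (NNReal.coe_nonneg _) (sq_nonneg _)

/-- Bound on the cost of moving `x` from `s` to `p`, where `p` is at least as close to `o` as `s` is.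
It is applied with `o` the nearest point to `x` in `Q` and `p` the nearest point to `o` in `S`. -/
lemma sq_dist_reassign_le {V : Type*} [MetricSpace V] {x s o p : V} {ε : ℝ} (hε : 0 < ε)
    (hp : dist o p ≤ dist o s) :
    dist x p ^ 2 ≤ dist x s ^ 2 + (2 * ε * dist x s ^ 2 + (4 + 2 / ε) * dist x o ^ 2) := by
  have h1 : dist x p ≤ 2 * dist x o + dist x s := by
    have := dist_triangle x o p
    have := dist_triangle o x s
    rw [dist_comm o x] at this
    linarith
  have h2 : dist x p ^ 2 ≤ (2 * dist x o + dist x s) ^ 2 := by gcongr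
  generalize dist x o = a at *
  generalize dist x s = b at *
  have h3 : 2 * ε * b ^ 2 + 2 / ε * a ^ 2 - 4 * a * b = 2 / ε * (ε * b - a) ^ 2 := by
    field_simp
    ring
  have h4 : 0 ≤ 2 / ε * (ε * b - a) ^ 2 := by positivity
  nlinarith

/-- Averaging the removals of the points of `S` that are nearest to no point of `Q`. -/
lemma card_mul_min_removal_le {V : Type*} [Fintype V] [MetricSpace V] [DecidableEq V]
    (w : V → NNReal) (k : ℕ) (hk : 1 ≤ k) (ε : ℝ) (hε0 : 0 < ε)
    (S : Finset V) (hS : S.Nonempty) (hik : 2 * k + 1 ≤ S.card) (Q : Finset V) (hQ : Q.card = k) :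
    (k : ℝ) * (S.inf' hS (fun y => kCost2 w (S.erase y) Finset.univ) - kCost2 w S Finset.univ) ≤
      2 * ε * kCost2 w S Finset.univ + (4 + 2 / ε) * kCost2 w Q Finset.univ := by
  have hQne : Q.Nonempty := Finset.card_pos.mp (by omega)
  choose s hsS hs using fun x => exists_distToSet_eq x hS
  choose o hoQ ho using fun x => exists_distToSet_eq x hQne
  set m := S.inf' hS (fun y => kCost2 w (S.erase y) Finset.univ)
  set C := S \ Q.image s with hC
  have hCk : k ≤ C.card := by
    have h1 := Finset.le_card_sdiff (Q.image s) S
    rw [← hC] at h1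
    have h2 : (Q.image s).card ≤ Q.card := Finset.card_image_le
    omega
  let G : V → ℝ := fun x =>
    (w x : ℝ) * (2 * ε * distToSet x S ^ 2 + (4 + 2 / ε) * distToSet x Q ^ 2)
  have hG0 : ∀ x, 0 ≤ G x := fun x => by positivity
  have hGsum : ∑ x, G x = 2 * ε * kCost2 w S Finset.univ + (4 + 2 / ε) * kCost2 w Q Finset.univ := by
    simp only [kCost2, Finset.mul_sum, ← Finset.sum_add_distrib]
    exact Finset.sum_congr rfl fun x _ => by ring
  have hstep : ∀ y ∈ C, m - kCost2 w S Finset.univ ≤ ∑ x, if s x = y then G x else 0 := by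
    intro y hy
    obtain ⟨hyS, hyT⟩ := Finset.mem_sdiff.mp hy
    have h1 : m ≤ kCost2 w (S.erase y) Finset.univ := Finset.inf'_le _ hyS
    suffices h : kCost2 w (S.erase y) Finset.univ ≤
        kCost2 w S Finset.univ + ∑ x, if s x = y then G x else 0 by linarith
    unfold kCost2
    rw [← Finset.sum_add_distrib]
    refine Finset.sum_le_sum fun x _ => ?_
    have hd := distToSet_nonneg x (S.erase y)
    split_ifs with hxy
    · have hmem : s (o x) ∈ S.erase y := by
        refine Finset.mem_erase.mpr ⟨fun h => hyT ?_, hsS _⟩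
        exact Finset.mem_image.mpr ⟨o x, hoQ x, h⟩
      have h2 : distToSet x (S.erase y) ^ 2 ≤ dist x (s (o x)) ^ 2 := by
        gcongr
        exact distToSet_le x hmem
      have h3 := sq_dist_reassign_le (x := x) (s := s x) (o := o x) (p := s (o x)) hε0
        ((hs (o x)).symm.trans_le (distToSet_le _ (hsS x)))
      rw [← hs x, ← ho x] at h3
      have h4 := mul_le_mul_of_nonneg_left (h2.trans h3) (w x).coe_nonneg
      rwa [mul_add] at h4
    · rw [add_zero]
      have h2 : distToSet x (S.erase y) ≤ distToSet x S :=
        (distToSet_le x (Finset.mem_erase.mpr ⟨hxy, hsS x⟩)).trans_eq (hs x).symm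
      gcongr
  have htotal : (C.card : ℝ) * (m - kCost2 w S Finset.univ) ≤ ∑ x, G x := by
    rw [← nsmul_eq_mul]
    refine (Finset.card_nsmul_le_sum C _ _ hstep).trans ?_
    rw [Finset.sum_comm]
    refine Finset.sum_le_sum fun x _ => ?_
    rw [Finset.sum_ite_eq]
    split_ifs
    exacts [le_rfl, hG0 x]
  rw [← hGsum]
  rcases le_total (m - kCost2 w S Finset.univ) 0 with h | h
  · exact (mul_nonpos_of_nonneg_of_nonpos (Nat.cast_nonneg k) h).trans
      (Finset.sum_nonneg fun x _ => hG0 x)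
  · exact (mul_le_mul_of_nonneg_right (Nat.cast_le.mpr hCk) h).trans htotal

/-- For `|S| = i ≥ 2k + 1` and `0 < ε < 1`,
`min_{y ∈ S} cost(S − y) ≤ (1 + 3ε/k)·cost(S) + ((4 + 2/ε)/k)·OPT_k(V)`
for the `k`-means objective. -/
theorem min_removal_cost_le_kmeans {V : Type*} [Fintype V] [MetricSpace V] [DecidableEq V]
    (w : V → NNReal) (k i : ℕ) (hk : 1 ≤ k)
    (ε : ℝ) (hε0 : 0 < ε) (hε1 : ε < 1)
    (S : Finset V) (hS : S.Nonempty) (hScard : S.card = i) (hik : 2 * k + 1 ≤ i) :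
    S.inf' hS (fun y => kCost2 w (S.erase y) Finset.univ) ≤
      (1 + 3 * ε / k) * kCost2 w S Finset.univ +
        ((4 + 2 / ε) / k) * kOPT2 w k Finset.univ Finset.univ := by
  have hk0 : (0 : ℝ) < k := by exact_mod_cast hk
  have hc : 0 < (4 + 2 / ε) / k := by positivity
  -- `OPT` is an infimum over a nonempty set, since `|V| ≥ |S| ≥ k`.
  have hne : {c : ℝ | ∃ Q : Finset V, Q ⊆ Finset.univ ∧ Q.card = k ∧
      c = kCost2 w Q Finset.univ}.Nonempty := by
    obtain ⟨Q, -, hQ⟩ := Finset.exists_subset_card_eq (s := S) (n := k) (by omega)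
    exact ⟨_, Q, Finset.subset_univ _, hQ, rfl⟩
  rw [← sub_le_iff_le_add', ← div_le_iff₀' hc]
  refine le_csInf hne ?_
  rintro _ ⟨Q, -, hQ, rfl⟩
  rw [div_le_iff₀' hc, sub_le_iff_le_add']
  have h := card_mul_min_removal_le w k hk ε hε0 S hS (by omega) Q hQ
  have hcost := mul_nonneg hε0.le (kCost2_nonneg w S Finset.univ)
  rw [← le_div_iff₀' hk0] at h
  have h2 : (2 * ε * kCost2 w S Finset.univ + (4 + 2 / ε) * kCost2 w Q Finset.univ) / k ≤
      (3 * ε * kCost2 w S Finset.univ + (4 + 2 / ε) * kCost2 w Q Finset.univ) / k := by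
    gcongr ?_ / _
    linarith
  calc _ ≤ kCost2 w S Finset.univ +
        (3 * ε * kCost2 w S Finset.univ + (4 + 2 / ε) * kCost2 w Q Finset.univ) / k := by linarith
    _ = _ := by ring
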